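/- Let x, y be probability vectors of dimension d. If there exist probability vectors c and c′ (of some finite dimensions) such that x⊗c ≺ y⊗c and y⊗c′ ≺ x⊗c′, then the nonincreasing rearrangements of x and y are equal, i.e., x is a permutation of y. Consequently, two bipartite pure states that are interconvertible under catalytic LOCC are related by local unitaries. -/

import Mathlib

/-- The sum of the `k` largest entries of a vector (equivalently, for vectors with
nonnegative entries, the maximum of `∑ i ∈ s, x i` over subsets `s` of cardinality at
most `k`; this also accounts for padding with zeros). -/
noncomputable def topSum {ι : Type*} [Fintype ι] [DecidableEq ι] (x : ι → ℝ) (k : ℕ) : ℝ :=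
  ((Finset.univ : Finset ι).powerset.filter (fun s => s.card ≤ k)).sup'
    ⟨∅, by simp⟩ (fun s => ∑ i ∈ s, x i)

/-- A probability vector: nonnegative entries summing to 1. -/
def IsProbVec {ι : Type*} [Fintype ι] (x : ι → ℝ) : Prop :=
  (∀ i, 0 ≤ x i) ∧ ∑ i, x i = 1

/-- `x ≺ y` (majorization, after padding with zeros to a common dimension): every partial
sum of the `k` largest entries of `x` is at most that of `y`, with equal total sums. -/
def PMaj {ι κ : Type*} [Fintype ι] [DecidableEq ι] [Fintype κ] [DecidableEq κ]
    (x : ι → ℝ) (y : κ → ℝ) : Prop :=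
  (∀ k : ℕ, topSum x k ≤ topSum y k) ∧ (∑ i, x i = ∑ j, y j)

/-- Tensor product of two vectors: `(x ⊗ y)_{(i,j)} = x_i y_j`. -/
def pvTensor {ι κ : Type*} (x : ι → ℝ) (y : κ → ℝ) : ι × κ → ℝ :=
  fun p => x p.1 * y p.2

/-!
If `x ≺ y` are nonnegative, then `∑ (xᵢ - t)⁺ ≤ ∑ (yⱼ - t)⁺` for every `t ≥ 0`. By Taylor's formula
`f a = f 0 + f' 0 * a + ∫ f'' t * (a - t)⁺`, a convex `C²` function vanishing at `0` (so that
padding with zeros is harmless) is linear up to a positive mixture of the functions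
`a ↦ (a - t)⁺`; hence `∑ f xᵢ ≤ ∑ f yⱼ`. For `f a = a ^ n` the sum over `x ⊗ c` factors into the
power sums of `x` and `c`, so the catalyst cancels. Conversion in both directions thus equates all
power sums of `x` and `y`, and by Dedekind's independence of the characters `n ↦ a ^ n` each value
occurs equally often in both.
-/

open Finset

section Taylor

theorem continuous_deriv2_mul_posPart_sub {f : ℝ → ℝ} (hf : ContDiff ℝ 2 f) (a : ℝ) :
    Continuous fun t ↦ deriv^[2] f t * (a - t)⁺ :=
  hf.deriv'.continuous_deriv_one.mul (continuous_posPart.comp (continuous_sub_left a))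

theorem continuous_deriv2_mul_sum_posPart_sub {ι : Type*} [Fintype ι] {f : ℝ → ℝ}
    (hf : ContDiff ℝ 2 f) (x : ι → ℝ) : Continuous fun t ↦ deriv^[2] f t * ∑ i, (x i - t)⁺ := by
  simp only [mul_sum]
  exact continuous_finsetSum _ fun i _ ↦ continuous_deriv2_mul_posPart_sub hf (x i)

theorem eq_add_deriv_mul_add_integral_posPart {f : ℝ → ℝ} (hf : ContDiff ℝ 2 f) {x₀ a b : ℝ}
    (ha : x₀ ≤ a) (hab : a ≤ b) :
    f a = f x₀ + deriv f x₀ * (a - x₀) + ∫ t in x₀..b, deriv^[2] f t * (a - t)⁺ := by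
  have hf' : ContDiff ℝ 1 (deriv f) := hf.deriv'
  have hcont := continuous_deriv2_mul_posPart_sub hf a
  have hleft : ∫ t in x₀..a, deriv^[2] f t * (a - t)⁺ = ∫ t in x₀..a, (a - t) * deriv^[2] f t :=
    intervalIntegral.integral_congr fun t ht ↦ by
      rw [Set.uIcc_of_le ha] at ht
      simp only [posPart_of_nonneg (sub_nonneg.2 ht.2), mul_comm]
  have hright : ∫ t in a..b, deriv^[2] f t * (a - t)⁺ = 0 :=
    intervalIntegral.integral_zero_ae (.of_forall fun t ht ↦ by
      rw [Set.uIoc_of_le hab] at ht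
      rw [posPart_of_nonpos (sub_nonpos.2 ht.1.le), mul_zero])
  have hparts : ∫ t in x₀..a, (a - t) * deriv^[2] f t
      = (a - a) * deriv f a - (a - x₀) * deriv f x₀ - ∫ t in x₀..a, -1 * deriv f t :=
    intervalIntegral.integral_mul_deriv_eq_deriv_mul
      (fun t _ ↦ (hasDerivAt_id t).const_sub a)
      (fun t _ ↦ (hf'.differentiable_one t).hasDerivAt)
      intervalIntegrable_const (hf'.continuous_deriv_one.intervalIntegrable _ _)
  have hftc : ∫ t in x₀..a, deriv f t = f a - f x₀ :=
    intervalIntegral.integral_deriv_eq_sub (fun t _ ↦ hf.differentiable two_ne_zero t)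
      (hf'.continuous.intervalIntegrable _ _)
  rw [← intervalIntegral.integral_add_adjacent_intervals (hcont.intervalIntegrable x₀ a)
      (hcont.intervalIntegrable a b), hleft, hright, hparts, intervalIntegral.integral_const_mul,
    hftc]
  ring

theorem sum_comp_eq_add_integral_sum_posPart {ι : Type*} [Fintype ι] {f : ℝ → ℝ}
    (hf : ContDiff ℝ 2 f) {x : ι → ℝ} {x₀ b : ℝ} (hx : ∀ i, x i ∈ Set.Icc x₀ b) :
    ∑ i, f (x i) = ∑ i, (f x₀ + deriv f x₀ * (x i - x₀)) +
      ∫ t in x₀..b, deriv^[2] f t * ∑ i, (x i - t)⁺ := by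
  simp only [mul_sum]
  rw [intervalIntegral.integral_finsetSum fun i _ ↦
      (continuous_deriv2_mul_posPart_sub hf (x i)).intervalIntegrable _ _, ← sum_add_distrib]
  exact sum_congr rfl fun i _ ↦ eq_add_deriv_mul_add_integral_posPart hf (hx i).1 (hx i).2

theorem deriv2_nonneg_of_convexOn_Ici {f : ℝ → ℝ} {a t : ℝ} (hf : ContDiff ℝ 2 f)
    (hconv : ConvexOn ℝ (Set.Ici a) f) (ht : a ≤ t) : 0 ≤ deriv^[2] f t := by
  have hmono : MonotoneOn (deriv f) (Set.Ici a) :=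
    hconv.monotoneOn_deriv fun s _ ↦ hf.differentiable two_ne_zero s
  have hderiv : derivWithin (deriv f) (Set.Ici a) t = deriv^[2] f t :=
    (hf.deriv'.differentiable_one t).derivWithin (uniqueDiffOn_Ici a t ht)
  exact hderiv ▸ hmono.derivWithin_nonneg

end Taylor

section Majorization

theorem sum_posPart_sub_eq {ι : Type*} [Fintype ι] (x : ι → ℝ) (t : ℝ) :
    ∑ i, (x i - t)⁺ = ∑ i with t < x i, x i - #{i | t < x i} * t := by
  have hpos (i : ι) : (x i - t)⁺ = if t < x i then x i - t else 0 := by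
    simp only [posPart_eq_ite_lt, sub_pos]
  simp only [hpos, ← sum_filter, sum_sub_distrib, sum_const, nsmul_eq_mul]

variable {ι κ : Type*} [Fintype ι] [DecidableEq ι] [Fintype κ] [DecidableEq κ]
  {x : ι → ℝ} {y : κ → ℝ}

theorem sum_le_topSum (x : ι → ℝ) {s : Finset ι} {k : ℕ} (hs : #s ≤ k) :
    ∑ i ∈ s, x i ≤ topSum x k :=
  le_sup' (fun s ↦ ∑ i ∈ s, x i) (by simpa using hs)

theorem topSum_le_mul_add_sum_posPart (x : ι → ℝ) (k : ℕ) {t : ℝ} (ht : 0 ≤ t) :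
    topSum x k ≤ k * t + ∑ i, (x i - t)⁺ := by
  refine sup'_le _ _ fun s hs ↦ ?_
  have hcard : #s ≤ k := by simpa using hs
  calc ∑ i ∈ s, x i = #s * t + ∑ i ∈ s, (x i - t) := by simp
    _ ≤ k * t + ∑ i ∈ s, (x i - t)⁺ := by gcongr; exact le_posPart _
    _ ≤ k * t + ∑ i, (x i - t)⁺ := by gcongr; exact s.subset_univ

theorem PMaj.sum_posPart_sub_le (h : PMaj x y) {t : ℝ} (ht : 0 ≤ t) :
    ∑ i, (x i - t)⁺ ≤ ∑ j, (y j - t)⁺ := by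
  rw [sum_posPart_sub_eq, sub_le_iff_le_add']
  exact (sum_le_topSum x le_rfl).trans <| (h.1 _).trans <| topSum_le_mul_add_sum_posPart y _ ht

theorem PMaj.sum_comp_le_sum_comp (h : PMaj x y) (hx : 0 ≤ x) (hy : 0 ≤ y) {f : ℝ → ℝ}
    (hf : ContDiff ℝ 2 f) (hconv : ConvexOn ℝ (Set.Ici 0) f) (hf0 : f 0 = 0) :
    ∑ i, f (x i) ≤ ∑ j, f (y j) := by
  have hxb (i : ι) : x i ∈ Set.Icc 0 (∑ j, y j) :=
    ⟨hx i, h.2 ▸ single_le_sum (fun i _ ↦ hx i) (mem_univ i)⟩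
  have hyb (j : κ) : y j ∈ Set.Icc 0 (∑ j, y j) :=
    ⟨hy j, single_le_sum (fun j _ ↦ hy j) (mem_univ j)⟩
  rw [sum_comp_eq_add_integral_sum_posPart hf hxb, sum_comp_eq_add_integral_sum_posPart hf hyb]
  simp only [hf0, zero_add, sub_zero, ← mul_sum, h.2]
  gcongr
  exact intervalIntegral.integral_mono_on (sum_nonneg fun j _ ↦ hy j)
    ((continuous_deriv2_mul_sum_posPart_sub hf x).intervalIntegrable _ _)
    ((continuous_deriv2_mul_sum_posPart_sub hf y).intervalIntegrable _ _)
    fun t ht ↦ mul_le_mul_of_nonneg_left (h.sum_posPart_sub_le ht.1)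
      (deriv2_nonneg_of_convexOn_Ici hf hconv ht.1)

end Majorization

section Catalysis

theorem IsProbVec.pos {ι : Type*} [Fintype ι] {c : ι → ℝ} (hc : IsProbVec c) : 0 < c :=
  lt_of_le_of_ne hc.1 <| by rintro rfl; simpa using hc.2

theorem pvTensor_nonneg {ι κ : Type*} {x : ι → ℝ} {c : κ → ℝ} (hx : 0 ≤ x) (hc : 0 ≤ c) :
    0 ≤ pvTensor x c :=
  fun p ↦ mul_nonneg (hx p.1) (hc p.2)

theorem sum_pvTensor_pow {ι κ : Type*} [Fintype ι] [Fintype κ] (x : ι → ℝ) (c : κ → ℝ) (n : ℕ) :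
    ∑ p, pvTensor x c p ^ n = (∑ i, x i ^ n) * ∑ j, c j ^ n := by
  simp only [pvTensor, Fintype.sum_prod_type, mul_pow, sum_mul_sum]

theorem sum_pow_pos_of_pos {ι R : Type*} [Fintype ι] [Semiring R] [PartialOrder R]
    [IsStrictOrderedRing R] {c : ι → R} (hc : 0 < c) (n : ℕ) : 0 < ∑ i, c i ^ n := by
  obtain ⟨hc0, i, hi⟩ := Pi.lt_def.1 hc
  exact sum_pos' (fun j _ ↦ pow_nonneg (hc0 j) n) ⟨i, mem_univ i, pow_pos hi n⟩

theorem sum_pow_le_of_pMaj_pvTensor {ι κ μ : Type*} [Fintype ι] [DecidableEq ι] [Fintype κ]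
    [DecidableEq κ] [Fintype μ] [DecidableEq μ] {x : ι → ℝ} {y : κ → ℝ} {c : μ → ℝ}
    (hx : 0 ≤ x) (hy : 0 ≤ y) (hc : 0 < c) (h : PMaj (pvTensor x c) (pvTensor y c))
    {n : ℕ} (hn : n ≠ 0) : ∑ i, x i ^ n ≤ ∑ j, y j ^ n := by
  have hle := h.sum_comp_le_sum_comp (pvTensor_nonneg hx hc.le) (pvTensor_nonneg hy hc.le)
    (contDiff_id.pow n) (convexOn_pow n) (zero_pow hn)
  simp only [id, sum_pvTensor_pow] at hle
  exact le_of_mul_le_mul_right hle (sum_pow_pos_of_pos hc n)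

end Catalysis

section PowerSums

variable {R : Type*} [CommRing R] [IsDomain R]

theorem linearIndependent_fun_pow : LinearIndependent R fun (a : R) (n : ℕ) ↦ a ^ n :=
  (linearIndependent_monoidHom (Multiplicative ℕ) R).comp (powersHom R) (powersHom R).injective

variable [CharZero R] {ι κ : Type*} [Fintype ι] [Fintype κ] {x : ι → R} {y : κ → R}

theorem card_filter_eq_of_sum_pow_eq [DecidableEq R] (h : ∀ n : ℕ, ∑ i, x i ^ n = ∑ j, y j ^ n)
    (a : R) : #{i | x i = a} = #{j | y j = a} := by
  have hsingle : ∑ i, Finsupp.single (x i) (1 : R) = ∑ j, Finsupp.single (y j) (1 : R) := by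
    apply linearIndependent_fun_pow
    ext n
    simpa [Finset.sum_apply] using h n
  simpa [Finsupp.finsetSum_apply, Finsupp.single_apply] using DFunLike.congr_fun hsingle a

theorem exists_equiv_of_sum_pow_eq (h : ∀ n : ℕ, ∑ i, x i ^ n = ∑ j, y j ^ n) :
    ∃ e : ι ≃ κ, x = y ∘ e := by
  classical
  have hfiber (a : R) : Nonempty ({i // x i = a} ≃ {j // y j = a}) := by
    rw [← Fintype.card_eq, Fintype.card_subtype, Fintype.card_subtype]
    exact card_filter_eq_of_sum_pow_eq h a
  obtain ⟨e⟩ := Classical.nonempty_pi.2 hfiber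
  exact ⟨Equiv.ofFiberEquiv e, funext fun i ↦ (Equiv.ofFiberEquiv_map e i).symm⟩

end PowerSums

theorem catalytic_interconvertible_perm_general {ι κ μ : Type*} [Fintype ι] [DecidableEq ι]
    [Fintype κ] [DecidableEq κ] [Fintype μ] [DecidableEq μ] {x y : ι → ℝ} {c : κ → ℝ} {c' : μ → ℝ}
    (hx : 0 ≤ x) (hy : 0 ≤ y) (hc : 0 < c) (hc' : 0 < c')
    (hxy : PMaj (pvTensor x c) (pvTensor y c)) (hyx : PMaj (pvTensor y c') (pvTensor x c')) :
    ∃ σ : Equiv.Perm ι, x = y ∘ σ := by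
  refine exists_equiv_of_sum_pow_eq fun n ↦ ?_
  obtain rfl | hn := eq_or_ne n 0
  · simp only [pow_zero]
  · exact (sum_pow_le_of_pMaj_pvTensor hx hy hc hxy hn).antisymm
      (sum_pow_le_of_pMaj_pvTensor hy hx hc' hyx hn)

/-- If `x` can be catalytically transformed into `y` and vice versa, then `x` is a
permutation of `y` (interconvertible states are related by local unitaries). -/
theorem catalytic_interconvertible_perm {d : ℕ} (x y : Fin d → ℝ)
    (hx : IsProbVec x) (hy : IsProbVec y)
    (h1 : ∃ (k : ℕ) (c : Fin k → ℝ), IsProbVec c ∧ PMaj (pvTensor x c) (pvTensor y c))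
    (h2 : ∃ (k : ℕ) (c : Fin k → ℝ), IsProbVec c ∧ PMaj (pvTensor y c) (pvTensor x c)) :
    ∃ σ : Equiv.Perm (Fin d), x = y ∘ σ := by
  obtain ⟨_, c, hc, hxy⟩ := h1
  obtain ⟨_, c', hc', hyx⟩ := h2
  exact catalytic_interconvertible_perm_general hx.1 hy.1 hc.pos hc'.pos hxy hyx
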